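/- Let D = ∩_{j=1}^N {x ∈ ℝ^d : ⟨v_j, x⟩ ≥ p_j} ⊆ ℝ^d be a convex polytope with unit normal vectors v_j, and let H_j = {x : ⟨v_j,x⟩ = p_j}. Fix 1 ≤ k ≤ d, indices j_1 < … < j_k in {1,…,N} with v_{j_1},…,v_{j_k} linearly independent, and reals 0 < δ_1 ≤ δ_2 ≤ … ≤ δ_k ≤ δ'. Let G := { x ∈ D : dist(x, H_{j_α}) ≥ δ_α for α = 1,…,k, and dist(x, H_j) ≥ δ' for all j ∉ {j_1,…,j_k} }. Then there exists an orthonormal basis e_1,…,e_d of ℝ^d such that: (i) for α = 1,…,k, e_α ∈ span{v_{j_1},…,v_{j_α}}, e_α ⊥ span{v_{j_1},…,v_{j_{α−1}}}, and ⟨e_α, v_{j_α}⟩ > 0; (ii) for α = k+1,…,d, e_α ⊥ span{v_{j_1},…,v_{j_k}}; and (iii) for every B > 0, every convex function f : D → ℝ with |f| ≤ B on D, every α ∈ {1,…,d} and all x, x+λe_α ∈ G, one has |f(x+λe_α) − f(x)| ≤ (2B/δ_α)|λ|, where δ_α := δ' for α > k. -/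

import Mathlib

open MeasureTheory Real

/-- The ε-bracketing number of a class `F` of real-valued functions, where brackets are
required to hold pointwise on `dom` and their size is measured by `size`. It is `⊤`
if no finite collection of brackets covers `F`. -/
noncomputable def bracketN {α : Type*} (ε : ℝ) (F : Set (α → ℝ)) (dom : Set α)
    (size : (α → ℝ) → ℝ) : ℕ∞ :=
  sInf {N : ℕ∞ | ∃ n : ℕ, (n : ℕ∞) = N ∧ ∃ l u : Fin n → α → ℝ,
    (∀ i, size (fun x => u i x - l i x) ≤ ε) ∧
    ∀ f ∈ F, ∃ i, ∀ x ∈ dom, l i x ≤ f x ∧ f x ≤ u i x}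

/-- The `L_p` size of a function over a domain `dom`, w.r.t. Lebesgue measure. -/
noncomputable def LpSize {d : ℕ} (p : ℝ) (dom : Set (EuclideanSpace ℝ (Fin d)))
    (g : EuclideanSpace ℝ (Fin d) → ℝ) : ℝ :=
  (∫ x in dom, |g x| ^ p) ^ (1 / p)

/-- The sup (`L_∞`) size of a function over a domain `dom`. -/
noncomputable def LinfSize {α : Type*} (dom : Set α) (g : α → ℝ) : ℝ :=
  sSup ((fun x => |g x|) '' dom)

/-- The class `C(D, B)` of convex functions on `D` bounded in absolute value by `B`. -/
def convexClass {d : ℕ} (D : Set (EuclideanSpace ℝ (Fin d))) (B : ℝ) :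
    Set (EuclideanSpace ℝ (Fin d) → ℝ) :=
  {f | ConvexOn ℝ D f ∧ ∀ x ∈ D, |f x| ≤ B}

/-- The class `C(D, B, Γ)` of convex functions on `D` bounded in absolute value by `B` and
with Lipschitz constant `Γ i` in the `i`-th coordinate direction. -/
def convexLipClass {d : ℕ} (D : Set (EuclideanSpace ℝ (Fin d))) (B : ℝ) (Γ : Fin d → ℝ) :
    Set (EuclideanSpace ℝ (Fin d) → ℝ) :=
  {f | ConvexOn ℝ D f ∧ (∀ x ∈ D, |f x| ≤ B) ∧
    ∀ i : Fin d, ∀ x ∈ D, ∀ l : ℝ, x + l • (EuclideanSpace.single i (1:ℝ)) ∈ D →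
      |f (x + l • EuclideanSpace.single i (1:ℝ)) - f x| ≤ Γ i * |l|}

/-!
The basis comes from the Gram–Schmidt process applied to `v_{j₁}, …, v_{j_k}`, completed to an
orthonormal basis in any way. Fix `α`. Moving along `e_α` stays parallel to the hyperplanes
`H_{j_β}` with `β < α`, and to all of them if `α > k`; every other hyperplane is at distance at
least `δ_α` from the points of `G`, because `δ` is increasing. Hence the segment of radius `δ_α`
along `e_α` about a point of `G` lies in `D`, and comparing slopes of `f` on the line through `x` in
direction `e_α` gives the Lipschitz bound.
-/

theorem abs_sub_le_two_mul_div_mul_of_convexOn {s : Set ℝ} {g : ℝ → ℝ} {B r a b : ℝ}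
    (hg : ConvexOn ℝ s g) (hB : ∀ t ∈ s, |g t| ≤ B) (hr : 0 < r)
    (ha : Metric.closedBall a r ⊆ s) (hb : Metric.closedBall b r ⊆ s) :
    |g b - g a| ≤ 2 * B / r * |b - a| := by
  wlog hab : a ≤ b generalizing a b
  · rw [abs_sub_comm, abs_sub_comm b]
    exact this hb ha (le_of_not_ge hab)
  rcases hab.eq_or_lt with rfl | hlt
  · simp
  rw [Real.closedBall_eq_Icc] at ha hb
  have ha_mem : a ∈ s := ha ⟨by linarith, by linarith⟩
  have hb_mem : b ∈ s := hb ⟨by linarith, by linarith⟩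
  have hleft_mem : a - r ∈ s := ha ⟨le_rfl, by linarith⟩
  have hright_mem : b + r ∈ s := hb ⟨by linarith, le_rfl⟩
  have hg_diff {p q : ℝ} (hp : p ∈ s) (hq : q ∈ s) : g q - g p ≤ 2 * B := by
    linarith [(abs_le.1 (hB p hp)).1, (abs_le.1 (hB q hq)).2]
  have hupper : (g b - g a) / (b - a) ≤ 2 * B / r :=
    calc (g b - g a) / (b - a) ≤ (g (b + r) - g b) / (b + r - b) :=
          hg.slope_mono_adjacent ha_mem hright_mem hlt (by linarith)
      _ = (g (b + r) - g b) / r := by rw [add_sub_cancel_left]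
      _ ≤ 2 * B / r := by gcongr; exact hg_diff hb_mem hright_mem
  have hlower : -(2 * B / r) ≤ (g b - g a) / (b - a) :=
    calc -(2 * B / r) = -(2 * B) / r := (neg_div _ _).symm
      _ ≤ (g a - g (a - r)) / r := by gcongr; linarith [hg_diff ha_mem hleft_mem]
      _ = (g a - g (a - r)) / (a - (a - r)) := by rw [sub_sub_cancel]
      _ ≤ (g b - g a) / (b - a) := hg.slope_mono_adjacent hleft_mem hb_mem (by linarith) hlt
  have hpos : 0 < |b - a| := abs_pos.2 (sub_pos.2 hlt).ne'
  rw [← div_le_iff₀ hpos, ← abs_div]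
  exact abs_le.2 ⟨hlower, hupper⟩

theorem abs_sub_le_two_mul_div_mul_of_convexOn_of_segments {E : Type*} [AddCommGroup E]
    [Module ℝ E] {D : Set E} {f : E → ℝ} {B r l : ℝ} {x e : E} (hf : ConvexOn ℝ D f)
    (hB : ∀ y ∈ D, |f y| ≤ B) (hr : 0 < r) (hx : ∀ t : ℝ, |t| ≤ r → x + t • e ∈ D)
    (hy : ∀ t : ℝ, |t| ≤ r → x + l • e + t • e ∈ D) :
    |f (x + l • e) - f x| ≤ 2 * B / r * |l| := by
  let line : ℝ →ᵃ[ℝ] E := AffineMap.lineMap x (x + e)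
  have hline (t : ℝ) : line t = x + t • e := by
    simp only [line, AffineMap.lineMap_apply_module', add_sub_cancel_left, add_comm]
  have hx_ball : Metric.closedBall 0 r ⊆ line ⁻¹' D := fun t ht => by
    rw [Set.mem_preimage, hline]
    exact hx t (mem_closedBall_zero_iff.1 ht)
  have hy_ball : Metric.closedBall l r ⊆ line ⁻¹' D := fun t ht => by
    have hmem := hy (t - l) ht
    rwa [add_assoc, ← add_smul, add_sub_cancel, ← hline] at hmem
  simpa [hline] using abs_sub_le_two_mul_div_mul_of_convexOn (hf.comp_affineMap line)
    (fun t ht => hB _ ht) hr hx_ball hy_ball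

section Polyhedron

variable {E ι κ : Type*} [NormedAddCommGroup E] [InnerProductSpace ℝ E]

/-- The hyperplane `⟪v, y⟫ = c` with normal vector `v`, which need not be a unit vector. For
`v = 0` and `c ≠ 0` it is empty, and then `Metric.infDist` gives the distance `0` to it. -/
def normalHyperplane (v : E) (c : ℝ) : Set E := {y | inner ℝ v y = c}

/-- The polyhedron cut out by the half-spaces `c i ≤ ⟪v i, x⟫`, the set `D` of the theorem; it may
be unbounded, and there may be infinitely many half-spaces. -/
def polyhedron (v : ι → E) (c : ι → ℝ) : Set E := ⋂ i, {x | c i ≤ inner ℝ (v i) x}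

/-- The set `G` of the theorem: the points of the polyhedron at distance at least `δ α` from the
hyperplane with index `j α`, and at least `δ'` from those with index outside the range of `j`. -/
def polyhedronInset (v : ι → E) (c : ι → ℝ) (j : κ → ι) (δ : κ → ℝ) (δ' : ℝ) : Set E :=
  {x ∈ polyhedron v c |
    (∀ α, δ α ≤ Metric.infDist x (normalHyperplane (v (j α)) (c (j α)))) ∧
    ∀ i, i ∉ Set.range j → δ' ≤ Metric.infDist x (normalHyperplane (v i) (c i))}

theorem infDist_normalHyperplane_mul_norm_le (v : E) (c : ℝ) (x : E) :
    Metric.infDist x (normalHyperplane v c) * ‖v‖ ≤ |inner ℝ v x - c| := by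
  rcases eq_or_ne v 0 with rfl | hv
  · simp
  have hv_norm : ‖v‖ ≠ 0 := norm_ne_zero_iff.2 hv
  -- the orthogonal projection of `x` onto the hyperplane is `x - s • v`
  set s : ℝ := (inner ℝ v x - c) / ‖v‖ ^ 2 with hs
  have hproj : x - s • v ∈ normalHyperplane v c := by
    rw [normalHyperplane, Set.mem_ofPred_eq, inner_sub_right, real_inner_smul_right,
      real_inner_self_eq_norm_sq, hs, div_mul_cancel₀ _ (pow_ne_zero 2 hv_norm), sub_sub_cancel]
  calc Metric.infDist x (normalHyperplane v c) * ‖v‖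
      ≤ dist x (x - s • v) * ‖v‖ := by gcongr; exact Metric.infDist_le_dist_of_mem hproj
    _ = |s| * ‖v‖ ^ 2 := by
        rw [dist_eq_norm, sub_sub_cancel, norm_smul, Real.norm_eq_abs, mul_assoc, sq]
    _ = |inner ℝ v x - c| := by
        rw [hs, abs_div, abs_of_nonneg (sq_nonneg ‖v‖), div_mul_cancel₀ _ (pow_ne_zero 2 hv_norm)]

theorem le_inner_add_of_norm_le_infDist {v x u : E} {c : ℝ} (hx : c ≤ inner ℝ v x)
    (hu : ‖u‖ ≤ Metric.infDist x (normalHyperplane v c)) : c ≤ inner ℝ v (x + u) := by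
  have hinner : |inner ℝ v u| ≤ inner ℝ v x - c :=
    calc |inner ℝ v u| ≤ ‖v‖ * ‖u‖ := abs_real_inner_le_norm v u
      _ ≤ ‖v‖ * Metric.infDist x (normalHyperplane v c) := by gcongr
      _ ≤ |inner ℝ v x - c| :=
        (mul_comm _ _).trans_le (infDist_normalHyperplane_mul_norm_le v c x)
      _ = inner ℝ v x - c := abs_of_nonneg (sub_nonneg.2 hx)
  rw [inner_add_right]
  linarith [neg_le_of_abs_le hinner]

variable {v : ι → E} {c : ι → ℝ} {j : κ → ι} {δ : κ → ℝ} {δ' B r : ℝ} {e x : E}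

theorem add_smul_mem_polyhedron_of_mem_polyhedronInset (he : ‖e‖ ≤ 1) (hr : r ≤ δ')
    (hδ : ∀ β, inner ℝ e (v (j β)) = 0 ∨ r ≤ δ β) (hx : x ∈ polyhedronInset v c j δ δ') {t : ℝ}
    (ht : |t| ≤ r) : x + t • e ∈ polyhedron v c := by
  obtain ⟨hxD, hx_range, hx_compl⟩ := hx
  have hx_ge (i : ι) : c i ≤ inner ℝ (v i) x := Set.mem_iInter.1 hxD i
  have hte : ‖t • e‖ ≤ r := by
    rw [norm_smul, Real.norm_eq_abs]
    exact (mul_le_of_le_one_right (abs_nonneg t) he).trans ht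
  refine Set.mem_iInter.2 fun i => ?_
  by_cases hi : i ∈ Set.range j
  · obtain ⟨β, rfl⟩ := hi
    rcases hδ β with horth | hrδ
    · simpa [inner_add_right, real_inner_smul_right, real_inner_comm e, horth] using hx_ge (j β)
    · exact le_inner_add_of_norm_le_infDist (hx_ge _) (hte.trans (hrδ.trans (hx_range β)))
  · exact le_inner_add_of_norm_le_infDist (hx_ge i) (hte.trans (hr.trans (hx_compl i hi)))

theorem abs_sub_le_of_convexOn_polyhedron_of_mem_polyhedronInset {f : E → ℝ}
    (hf : ConvexOn ℝ (polyhedron v c) f) (hB : ∀ y ∈ polyhedron v c, |f y| ≤ B) (he : ‖e‖ ≤ 1)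
    (hr_pos : 0 < r) (hr : r ≤ δ') (hδ : ∀ β, inner ℝ e (v (j β)) = 0 ∨ r ≤ δ β)
    (hx : x ∈ polyhedronInset v c j δ δ') {l : ℝ}
    (hxl : x + l • e ∈ polyhedronInset v c j δ δ') :
    |f (x + l • e) - f x| ≤ 2 * B / r * |l| :=
  abs_sub_le_two_mul_div_mul_of_convexOn_of_segments hf hB hr_pos
    (fun _ => add_smul_mem_polyhedron_of_mem_polyhedronInset he hr hδ hx)
    (fun _ => add_smul_mem_polyhedron_of_mem_polyhedronInset he hr hδ hxl)

end Polyhedron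

section GramSchmidt

open InnerProductSpace Module

variable {𝕜 E ι κ : Type*} [RCLike 𝕜] [NormedAddCommGroup E] [InnerProductSpace 𝕜 E]

theorem exists_orthonormalBasis_comp_eq [FiniteDimensional 𝕜 E] [Fintype ι]
    (hι : finrank 𝕜 E = Fintype.card ι) {u : κ → E} (hu : Orthonormal 𝕜 u) {φ : κ → ι}
    (hφ : Function.Injective φ) : ∃ b : OrthonormalBasis ι 𝕜 E, ∀ a, b (φ a) = u a := by
  have hrestrict : Orthonormal 𝕜 ((Set.range φ).domRestrict (Function.extend φ u 0)) := by
    have hcomp : (Set.range φ).domRestrict (Function.extend φ u 0) =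
        u ∘ (Equiv.ofInjective φ hφ).symm := by
      ext ⟨_, a, rfl⟩
      simp [hφ.extend_apply]
    rw [hcomp]
    exact hu.comp _ (Equiv.injective _)
  obtain ⟨b, hb⟩ := hrestrict.exists_orthonormalBasis_extension_of_card_eq hι
  exact ⟨b, fun a => (hb _ ⟨a, rfl⟩).trans (hφ.extend_apply u 0 a)⟩

variable [LinearOrder κ] [LocallyFiniteOrderBot κ] [WellFoundedLT κ]

theorem gramSchmidtNormed_mem_span (w : κ → E) (a : κ) :
    gramSchmidtNormed 𝕜 w a ∈ Submodule.span 𝕜 (w '' Set.Iic a) :=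
  Submodule.smul_mem _ _ (gramSchmidt_mem_span 𝕜 w le_rfl)

theorem inner_gramSchmidtNormed_of_lt (w : κ → E) {a b : κ} (hba : b < a) :
    inner 𝕜 (gramSchmidtNormed 𝕜 w a) (w b) = 0 := by
  rw [gramSchmidtNormed, inner_smul_left, gramSchmidt_inv_triangular 𝕜 w hba, mul_zero]

theorem inner_gramSchmidt_self (w : κ → E) (a : κ) :
    inner 𝕜 (gramSchmidt 𝕜 w a) (w a) = (‖gramSchmidt 𝕜 w a‖ : 𝕜) ^ 2 := by
  conv_lhs => rw [gramSchmidt_def'' 𝕜 w a]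
  rw [inner_add_right, inner_sum, Finset.sum_eq_zero, add_zero, inner_self_eq_norm_sq_to_K]
  intro b hb
  rw [inner_smul_right, gramSchmidt_orthogonal 𝕜 w (Finset.mem_Iio.1 hb).ne', mul_zero]

theorem inner_gramSchmidtNormed_self (w : κ → E) (a : κ) :
    inner 𝕜 (gramSchmidtNormed 𝕜 w a) (w a) = (‖gramSchmidt 𝕜 w a‖ : 𝕜) := by
  rw [gramSchmidtNormed, inner_smul_left, inner_gramSchmidt_self, RCLike.conj_inv,
    RCLike.conj_ofReal, sq, ← mul_assoc, inv_mul_mul_self]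

theorem exists_orthonormalBasis_comp_eq_gramSchmidtNormed [FiniteDimensional 𝕜 E] [Fintype ι]
    (hι : finrank 𝕜 E = Fintype.card ι) {w : κ → E} (hw : LinearIndependent 𝕜 w) {φ : κ → ι}
    (hφ : Function.Injective φ) :
    ∃ b : OrthonormalBasis ι 𝕜 E, (∀ a, b (φ a) = gramSchmidtNormed 𝕜 w a) ∧
      ∀ i ∉ Set.range φ, ∀ a, inner 𝕜 (b i) (w a) = 0 := by
  obtain ⟨b, hb⟩ := exists_orthonormalBasis_comp_eq hι (gramSchmidtNormed_orthonormal hw) hφ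
  refine ⟨b, hb, fun i hi a => ?_⟩
  have hle : Submodule.span 𝕜 (Set.range (gramSchmidtNormed 𝕜 w)) ≤ (𝕜 ∙ b i)ᗮ := by
    rw [Submodule.span_le]
    rintro _ ⟨a', rfl⟩
    rw [SetLike.mem_coe, Submodule.mem_orthogonal_singleton_iff_inner_right, ← hb]
    exact b.orthonormal.2 fun h => hi ⟨a', h.symm⟩
  rw [span_gramSchmidtNormed_range, span_gramSchmidt] at hle
  exact Submodule.mem_orthogonal_singleton_iff_inner_right.1
    (hle (Submodule.subset_span ⟨a, rfl⟩))

end GramSchmidt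

theorem exists_orthonormalBasis_adapted {E : Type*} [NormedAddCommGroup E]
    [InnerProductSpace ℝ E] [FiniteDimensional ℝ E] {d k : ℕ} (hd : Module.finrank ℝ E = d)
    (hkd : k ≤ d) {w : Fin k → E} (hw : LinearIndependent ℝ w) :
    ∃ e : OrthonormalBasis (Fin d) ℝ E,
      (∀ α : Fin k,
        e (Fin.castLE hkd α) ∈ Submodule.span ℝ (w '' {β | β ≤ α}) ∧
        (∀ β, β < α → inner ℝ (e (Fin.castLE hkd α)) (w β) = 0) ∧
        0 < inner ℝ (e (Fin.castLE hkd α)) (w α)) ∧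
      ∀ α : Fin d, k ≤ (α : ℕ) → ∀ β, inner ℝ (e α) (w β) = 0 := by
  obtain ⟨e, he_low, he_high⟩ := exists_orthonormalBasis_comp_eq_gramSchmidtNormed
    (hd.trans (Fintype.card_fin d).symm) hw (Fin.castLE_injective hkd)
  refine ⟨e, fun α => ?_, fun α hα => he_high α ?_⟩
  · rw [he_low]
    refine ⟨gramSchmidtNormed_mem_span w α, fun β => inner_gramSchmidtNormed_of_lt w, ?_⟩
    rw [inner_gramSchmidtNormed_self]
    exact norm_pos_iff.2 (InnerProductSpace.gramSchmidt_ne_zero α hw)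
  · rintro ⟨β, rfl⟩
    exact hα.not_gt β.isLt

theorem adapted_basis_lipschitz_general {E ι : Type*} [NormedAddCommGroup E]
    [InnerProductSpace ℝ E] [FiniteDimensional ℝ E] {d k : ℕ} (hd : Module.finrank ℝ E = d)
    (hkd : k ≤ d) (v : ι → E) (c : ι → ℝ) (j : Fin k → ι)
    (hind : LinearIndependent ℝ (fun β => v (j β))) (δ : Fin k → ℝ) (δ' : ℝ)
    (hδpos : ∀ α, 0 < δ α) (hδ'pos : 0 < δ') (hδmono : Monotone δ) (hδ' : ∀ α, δ α ≤ δ') :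
    ∃ e : OrthonormalBasis (Fin d) ℝ E,
      (∀ α : Fin k,
        e (Fin.castLE hkd α) ∈ Submodule.span ℝ ((fun β => v (j β)) '' {β | β ≤ α}) ∧
        (∀ β, β < α → inner ℝ (e (Fin.castLE hkd α)) (v (j β)) = 0) ∧
        0 < inner ℝ (e (Fin.castLE hkd α)) (v (j α))) ∧
      (∀ α : Fin d, k ≤ (α : ℕ) → ∀ β, inner ℝ (e α) (v (j β)) = 0) ∧
      ∀ (B : ℝ) (f : E → ℝ), ConvexOn ℝ (polyhedron v c) f → (∀ x ∈ polyhedron v c, |f x| ≤ B) →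
        ∀ α : Fin d, ∀ x ∈ polyhedronInset v c j δ δ', ∀ l : ℝ,
          x + l • e α ∈ polyhedronInset v c j δ δ' →
          |f (x + l • e α) - f x| ≤
            2 * B / (if h : (α : ℕ) < k then δ ⟨α, h⟩ else δ') * |l| := by
  obtain ⟨e, he_low, he_high⟩ := exists_orthonormalBasis_adapted hd hkd hind
  refine ⟨e, he_low, he_high, fun B f hf hB α x hx l hxl => ?_⟩
  have he : ‖e α‖ ≤ 1 := (e.norm_eq_one α).le
  split_ifs with h
  · have hδ (β : Fin k) : inner ℝ (e α) (v (j β)) = 0 ∨ δ ⟨α, h⟩ ≤ δ β :=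
      (lt_or_ge β ⟨α, h⟩).imp ((he_low ⟨α, h⟩).2.1 β) fun hβ => hδmono hβ
    exact abs_sub_le_of_convexOn_polyhedron_of_mem_polyhedronInset hf hB he (hδpos _) (hδ' _) hδ
      hx hxl
  · exact abs_sub_le_of_convexOn_polyhedron_of_mem_polyhedronInset hf hB he hδ'pos le_rfl
      (fun β => .inl (he_high α (not_lt.1 h) β)) hx hxl

/-- **Proposition (adapted orthonormal basis and directional Lipschitz bounds).** For a
polytope `D = ∩ⱼ {⟨vⱼ,x⟩ ≥ pⱼ}` with unit normals, indices `j₁ < ⋯ < j_k` with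
`v_{j₁},…,v_{j_k}` linearly independent, `0 < δ₁ ≤ ⋯ ≤ δ_k ≤ δ'`, and
`G = {x ∈ D : dist(x,H_{j_α}) ≥ δ_α, dist(x,H_j) ≥ δ' for j ∉ {j₁,…,j_k}}`, there is an
orthonormal basis `e₁,…,e_d` with the Gram–Schmidt properties (i)–(ii) such that every convex
`f` with `|f| ≤ B` on `D` is `2B/δ_α`-Lipschitz along `e_α` within `G` (with `δ_α := δ'` for
`α > k`). -/
theorem adapted_basis_lipschitz (d N : ℕ) (hd : 1 ≤ d)
    (v : Fin N → EuclideanSpace ℝ (Fin d)) (hv : ∀ j, ‖v j‖ = 1) (c : Fin N → ℝ)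
    (D : Set (EuclideanSpace ℝ (Fin d)))
    (hD : D = ⋂ j, {x : EuclideanSpace ℝ (Fin d) | c j ≤ inner ℝ (v j) x})
    (k : ℕ) (hk1 : 1 ≤ k) (hkd : k ≤ d)
    (j : Fin k → Fin N) (hj : StrictMono j)
    (hind : LinearIndependent ℝ (fun β : Fin k => v (j β)))
    (δ : Fin k → ℝ) (δ' : ℝ) (hδpos : ∀ α, 0 < δ α)
    (hδmono : ∀ α β : Fin k, α ≤ β → δ α ≤ δ β) (hδ' : ∀ α, δ α ≤ δ')
    (G : Set (EuclideanSpace ℝ (Fin d)))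
    (hG : G = {x ∈ D |
      (∀ α : Fin k,
        δ α ≤ Metric.infDist x {y : EuclideanSpace ℝ (Fin d) | (inner ℝ (v (j α)) y : ℝ) = c (j α)}) ∧
      ∀ j' : Fin N, j' ∉ Set.range j →
        δ' ≤ Metric.infDist x {y : EuclideanSpace ℝ (Fin d) | (inner ℝ (v j') y : ℝ) = c j'}}) :
    ∃ e : Fin d → EuclideanSpace ℝ (Fin d), Orthonormal ℝ e ∧
      (∀ α : Fin k,
        e (Fin.castLE hkd α) ∈ Submodule.span ℝ ((fun β => v (j β)) '' {β : Fin k | β ≤ α}) ∧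
        (∀ β : Fin k, β < α → (inner ℝ (e (Fin.castLE hkd α)) (v (j β)) : ℝ) = 0) ∧
        0 < (inner ℝ (e (Fin.castLE hkd α)) (v (j α)) : ℝ)) ∧
      (∀ α : Fin d, k ≤ (α : ℕ) → ∀ β : Fin k, (inner ℝ (e α) (v (j β)) : ℝ) = 0) ∧
      ∀ B : ℝ, 0 < B → ∀ f : EuclideanSpace ℝ (Fin d) → ℝ,
        ConvexOn ℝ D f → (∀ x ∈ D, |f x| ≤ B) →
        ∀ α : Fin d, ∀ x ∈ G, ∀ l : ℝ, x + l • e α ∈ G →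
          |f (x + l • e α) - f x| ≤
            (2 * B / (if h : (α : ℕ) < k then δ ⟨α, h⟩ else δ')) * |l| := by
  subst hD hG
  obtain ⟨e, he_low, he_high, hlip⟩ := adapted_basis_lipschitz_general finrank_euclideanSpace_fin
    hkd v c j hind δ δ' hδpos ((hδpos ⟨0, hk1⟩).trans_le (hδ' _)) hδmono hδ'
  exact ⟨e, e.orthonormal, he_low, he_high, fun B _ => hlip B⟩
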